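/- The cubic curve 3x³ + 4y³ + 5z³ = 0 has no nontrivial rational solutions: there are no rational numbers x, y, z, not all zero, with 3x³ + 4y³ + 5z³ = 0. -/

import Mathlib

/-!
Let `3x³ + 4y³ + 5z³ = 0` with coprime integers `x, y, z`, and let `θ³ = 6`. Then `2y + xθ` has norm
`-10z³`, and since `x + 2y ≡ 0 mod 5` it equals `(θ - 1)(2 - θ)α` with `α` integral of norm `(-z)³`
and coprime to the product `β` of its conjugates. The field `ℚ(θ)` has class number one, and modulo
cubes its units are generated by `(2 - θ)³ / 2`, which is not a cube of a unit because `2` is not a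
cube modulo the prime `(θ + 1)` of norm `7`. As this generator is a rational number times a cube in
`ℚ(θ)`, so is every unit, and hence so is `α`. Thus `(θ - 1)(2 - θ)g³` has vanishing `θ²`-coordinate
for some `g ≠ 0`. That coordinate is a cubic form in the coordinates of `g` which has no nontrivial
zero over the `3`-adic numbers.
-/

open NumberField Module

section PrimitiveVectors

theorem exists_eq_smul_of_gcd_eq_one {R K ι : Type*} [CommRing R] [IsDomain R]
    [NormalizedGCDMonoid R] [Field K] [Algebra R K] [IsFractionRing R K] [Fintype ι]
    {v : ι → K} (hv : v ≠ 0) :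
    ∃ (r : K) (w : ι → R), r ≠ 0 ∧ Finset.univ.gcd w = 1 ∧
      ∀ i, v i = r * algebraMap R K (w i) := by
  obtain ⟨b, hb⟩ := IsLocalization.exist_integer_multiples_of_finite (nonZeroDivisors R) v
  choose u hu using hb
  obtain ⟨i₀, hi₀⟩ := Function.ne_iff.mp hv
  have hb0 : algebraMap R K b ≠ 0 := IsFractionRing.to_map_ne_zero_of_mem_nonZeroDivisors b.2
  obtain ⟨w, huw, hw⟩ := Finset.extract_gcd u ⟨i₀, Finset.mem_univ i₀⟩
  have hvw (i) : v i = algebraMap R K (Finset.univ.gcd u) / algebraMap R K b *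
      algebraMap R K (w i) := by
    rw [div_mul_eq_mul_div, eq_div_iff hb0, ← map_mul, ← huw i (Finset.mem_univ i), hu,
      Algebra.smul_def, mul_comm]
  refine ⟨_, w, fun hr ↦ hi₀ ?_, hw, hvw⟩
  rw [hvw, hr, zero_mul, Pi.zero_apply]

theorem exists_primitive_integer_triple {x y z : ℚ} (h : ¬(x = 0 ∧ y = 0 ∧ z = 0)) :
    ∃ (r : ℚ) (a b c : ℤ), r ≠ 0 ∧ (∀ d : ℤ, d ∣ a → d ∣ b → d ∣ c → IsUnit d) ∧
      x = r * a ∧ y = r * b ∧ z = r * c := by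
  have hv : ![x, y, z] ≠ 0 := by simpa using h
  obtain ⟨r, w, hr, hw, hvw⟩ := exists_eq_smul_of_gcd_eq_one (R := ℤ) hv
  refine ⟨r, w 0, w 1, w 2, hr, fun d h0 h1 h2 ↦ isUnit_of_dvd_one ?_, hvw 0, hvw 1, hvw 2⟩
  rw [← hw]
  exact Finset.dvd_gcd fun i _ ↦ by fin_cases i <;> assumption

end PrimitiveVectors

/-- The norm form `N(a + bθ + cθ²)` of the pure cubic extension generated by `θ = ∛m`. -/
def pureCubicNorm {R : Type*} [CommRing R] (m a b c : R) : R :=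
  a ^ 3 + m * b ^ 3 + m ^ 2 * c ^ 3 - 3 * m * a * b * c

/-- `L = F(θ)` is a pure cubic extension of `F`, with `θ` a cube root of `m`; that `θ` generates
`L` is expressed by the degree. -/
structure IsPureCubic {F L : Type*} [Field F] [Field L] [Algebra F L] (m : F) (θ : L) : Prop where
  pow_three : θ ^ 3 = algebraMap F L m
  not_cube : ∀ r : F, r ^ 3 ≠ m
  finrank_eq : finrank F L = 3

namespace IsPureCubic

section Field

open Polynomial

variable {F L : Type*} [Field F] [Field L] [Algebra F L] {m : F} {θ : L}

theorem ne_zero (h : IsPureCubic m θ) : m ≠ 0 :=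
  fun hm ↦ h.not_cube 0 (by simp [hm])

theorem linearIndependent (h : IsPureCubic m θ) :
    LinearIndependent F fun i : Fin 3 ↦ θ ^ (i : ℕ) := by
  have hirr : Irreducible (X ^ 3 - C m) :=
    X_pow_sub_C_irreducible_of_prime Nat.prime_three h.not_cube
  have hmin : minpoly F θ = X ^ 3 - C m :=
    (minpoly.eq_of_irreducible_of_monic hirr (by simp [h.pow_three])
      (monic_X_pow_sub_C m three_ne_zero)).symm
  have hdeg : 3 = (minpoly F θ).natDegree := by rw [hmin, natDegree_X_pow_sub_C]
  exact (linearIndependent_pow θ).comp (finCongr hdeg) (finCongr hdeg).injective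

/-- The basis `1, θ, θ²`. -/
noncomputable def basis (h : IsPureCubic m θ) : Basis (Fin 3) F L :=
  basisOfLinearIndependentOfCardEqFinrank h.linearIndependent (by simp [h.finrank_eq])

theorem basis_apply (h : IsPureCubic m θ) (i : Fin 3) : h.basis i = θ ^ (i : ℕ) := by
  simp [basis]

theorem repr_eq (h : IsPureCubic m θ) (a b c : F) :
    ⇑(h.basis.repr (a • 1 + b • θ + c • θ ^ 2)) = ![a, b, c] := by
  have : a • 1 + b • θ + c • θ ^ 2 = ∑ i, ![a, b, c] i • h.basis i := by
    simp [Fin.sum_univ_three, basis_apply]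
  rw [this, h.basis.repr_sum_self]

theorem exists_coords (h : IsPureCubic m θ) (x : L) :
    ∃ a b c : F, x = a • 1 + b • θ + c • θ ^ 2 := by
  refine ⟨h.basis.repr x 0, h.basis.repr x 1, h.basis.repr x 2, ?_⟩
  conv_lhs => rw [← h.basis.sum_repr x]
  simp [Fin.sum_univ_three, basis_apply]

theorem mul_coords (h : IsPureCubic m θ) (a b c a' b' c' : F) :
    (a • 1 + b • θ + c • θ ^ 2) * (a' • 1 + b' • θ + c' • θ ^ 2) =
      (a * a' + m * (b * c' + c * b')) • 1 + (a * b' + b * a' + m * (c * c')) • θ +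
        (a * c' + b * b' + c * a') • θ ^ 2 := by
  simp only [Algebra.smul_def, map_add, map_mul, ← h.pow_three]
  ring

theorem leftMulMatrix_eq (h : IsPureCubic m θ) (a b c : F) :
    Algebra.leftMulMatrix h.basis (a • 1 + b • θ + c • θ ^ 2) =
      !![a, m * c, m * b; b, a, m * c; c, b, a] := by
  have h0 : h.basis 0 = (1 : F) • 1 + (0 : F) • θ + (0 : F) • θ ^ 2 := by simp [basis_apply]
  have h1 : h.basis 1 = (0 : F) • 1 + (1 : F) • θ + (0 : F) • θ ^ 2 := by simp [basis_apply]
  have h2 : h.basis 2 = (0 : F) • 1 + (0 : F) • θ + (1 : F) • θ ^ 2 := by simp [basis_apply]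
  ext i j
  rw [Algebra.leftMulMatrix_eq_repr_mul]
  fin_cases j
  · simp only [Fin.zero_eta, h0, h.mul_coords, h.repr_eq]; fin_cases i <;> simp
  · simp only [Fin.mk_one, h1, h.mul_coords, h.repr_eq]; fin_cases i <;> simp
  · simp only [Fin.reduceFinMk, h2, h.mul_coords, h.repr_eq]; fin_cases i <;> simp

theorem norm_eq (h : IsPureCubic m θ) (a b c : F) :
    Algebra.norm F (a • 1 + b • θ + c • θ ^ 2) = pureCubicNorm m a b c := by
  rw [Algebra.norm_eq_matrix_det h.basis, leftMulMatrix_eq, Matrix.det_fin_three, pureCubicNorm]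
  simp only [Matrix.of_apply, Matrix.cons_val', Matrix.cons_val_fin_one, Matrix.cons_val]
  ring

theorem trace_eq (h : IsPureCubic m θ) (a b c : F) :
    Algebra.trace F L (a • 1 + b • θ + c • θ ^ 2) = 3 * a := by
  rw [Algebra.trace_eq_matrix_trace h.basis, leftMulMatrix_eq, Matrix.trace_fin_three]
  simp only [Matrix.of_apply, Matrix.cons_val', Matrix.cons_val_fin_one, Matrix.cons_val]
  ring

theorem adjoinRoot {m : F} [Fact (Irreducible (X ^ 3 - C m))] (hm : ∀ r : F, r ^ 3 ≠ m) :
    IsPureCubic m (AdjoinRoot.root (X ^ 3 - C m)) where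
  pow_three := by
    have := AdjoinRoot.eval₂_root (X ^ 3 - C m)
    rwa [eval₂_sub, eval₂_X_pow, eval₂_C, sub_eq_zero] at this
  not_cube := hm
  finrank_eq := by
    rw [(AdjoinRoot.powerBasis (monic_X_pow_sub_C m three_ne_zero).ne_zero).finrank,
      AdjoinRoot.powerBasis_dim, natDegree_X_pow_sub_C]

end Field

theorem isIntegral {L : Type*} [Field L] [Algebra ℚ L] {m : ℤ} {θ : L}
    (h : IsPureCubic (m : ℚ) θ) : IsIntegral ℤ θ := by
  refine .of_pow (n := 3) three_pos ?_
  rw [h.pow_three, map_intCast]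
  exact isIntegral_algebraMap (x := m)

theorem exists_numberField {m : ℤ} (hm : ∀ r : ℚ, r ^ 3 ≠ m) :
    ∃ (K : Type) (_ : Field K) (_ : NumberField K) (t : 𝓞 K), IsPureCubic (m : ℚ) (t : K) := by
  open Polynomial in
  have : Fact (Irreducible (X ^ 3 - C (m : ℚ))) :=
    ⟨X_pow_sub_C_irreducible_of_prime Nat.prime_three hm⟩
  have h := adjoinRoot hm
  have : NumberField (AdjoinRoot (X ^ 3 - C (m : ℚ))) :=
    { to_finiteDimensional := .of_finrank_pos (by simp [h.finrank_eq]) }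
  exact ⟨_, inferInstance, inferInstance, ⟨_, h.isIntegral⟩, h⟩

end IsPureCubic

theorem exists_discr_eq_sq_mul {K ι : Type*} [Field K] [NumberField K] [Fintype ι] [DecidableEq ι]
    (v : ι → 𝓞 K) (hι : Fintype.card ι = finrank ℚ K) :
    ∃ n : ℤ, Algebra.discr ℤ v = n ^ 2 * discr K := by
  have hcard : Fintype.card (Free.ChooseBasisIndex ℤ (𝓞 K)) = Fintype.card ι := by
    rw [← finrank_eq_card_basis (RingOfIntegers.basis K), RingOfIntegers.rank, hι]
  let b : Basis ι ℤ (𝓞 K) := (RingOfIntegers.basis K).reindex (Fintype.equivOfCardEq hcard)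
  have hv : Matrix.vecMul b ((b.toMatrix v).map (algebraMap ℤ (𝓞 K))) = v := by
    ext1 j
    conv_rhs => rw [← b.sum_toMatrix_smul_self v j]
    simp [Matrix.vecMul, dotProduct, mul_comm]
  exact ⟨(b.toMatrix v).det, by
    rw [← discr_eq_discr K b, ← Algebra.discr_of_matrix_vecMul, hv]⟩

section PrimeIdeals

variable {K : Type*} [Field K] [NumberField K] {P : Ideal (𝓞 K)}

theorem isPrincipal_of_mem_of_prime_norm (hP : P ≠ ⊤) {g : 𝓞 K}
    (hg : (Algebra.norm ℤ g).natAbs.Prime) (hgP : g ∈ P) : P.IsPrincipal := by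
  have hspan : (Ideal.span {g}).IsPrime :=
    Ideal.isPrime_of_irreducible_absNorm (by rwa [Ideal.absNorm_span_singleton])
  have hne : Ideal.span {g} ≠ ⊥ := by
    rintro h
    simp [Ideal.span_singleton_eq_bot.mp h, Nat.not_prime_zero] at hg
  exact ⟨g, ((hspan.isMaximal hne).eq_of_le hP <|
    (Ideal.span_singleton_le_iff_mem P).mpr hgP).symm⟩

theorem pow_absNorm_sub_self_mem [P.IsPrime] (hP : P ≠ ⊥) (x : 𝓞 K) :
    x ^ Ideal.absNorm P - x ∈ P := by
  have : P.IsMaximal := Ideal.IsPrime.isMaximal inferInstance hP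
  let := Ideal.Quotient.field P
  have : Finite (𝓞 K ⧸ P) := Ideal.finiteQuotientOfFreeOfNeBot P hP
  let := Fintype.ofFinite (𝓞 K ⧸ P)
  rw [← Ideal.Quotient.eq, map_pow, Ideal.absNorm_apply, Submodule.cardQuot_apply,
    Nat.card_eq_fintype_card]
  exact FiniteField.pow_card _

end PrimeIdeals

namespace IsPureCubic

section RingOfIntegers

variable {K : Type*} [Field K] [NumberField K] {m : ℤ} {t : 𝓞 K}

theorem pow_three_int (h : IsPureCubic (m : ℚ) (t : K)) : t ^ 3 = m := by
  apply RingOfIntegers.coe_injective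
  simpa using h.pow_three

theorem coe_add_mul_add_mul_sq (a b c : ℤ) :
    ((a + b * t + c * t ^ 2 : 𝓞 K) : K) =
      (a : ℚ) • 1 + (b : ℚ) • (t : K) + (c : ℚ) • (t : K) ^ 2 := by
  simp [Algebra.smul_def]

theorem norm_int (h : IsPureCubic (m : ℚ) (t : K)) (a b c : ℤ) :
    Algebra.norm ℤ ((a : 𝓞 K) + b * t + c * t ^ 2) = pureCubicNorm m a b c := by
  have hQ := h.norm_eq a b c
  have hZ := Algebra.coe_norm_int (K := K) (a + b * t + c * t ^ 2)
  rw [coe_add_mul_add_mul_sq, hQ, pureCubicNorm] at hZ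
  rw [pureCubicNorm]
  exact_mod_cast hZ

theorem trace_int (h : IsPureCubic (m : ℚ) (t : K)) (a b c : ℤ) :
    Algebra.trace ℤ (𝓞 K) (a + b * t + c * t ^ 2) = 3 * a := by
  have hQ := h.trace_eq a b c
  have hZ := Algebra.coe_trace_int (K := K) (a + b * t + c * t ^ 2)
  rw [coe_add_mul_add_mul_sq, hQ] at hZ
  exact_mod_cast hZ

theorem discr_pow (h : IsPureCubic (m : ℚ) (t : K)) :
    Algebra.discr ℤ (fun i : Fin 3 ↦ t ^ (i : ℕ)) = -27 * m ^ 2 := by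
  have h0 : Algebra.trace ℤ (𝓞 K) 1 = 3 := by simpa using h.trace_int 1 0 0
  have h1 : Algebra.trace ℤ (𝓞 K) t = 0 := by simpa using h.trace_int 0 1 0
  have h2 : Algebra.trace ℤ (𝓞 K) (t ^ 2) = 0 := by simpa using h.trace_int 0 0 1
  have h3 : Algebra.trace ℤ (𝓞 K) (t ^ 3) = 3 * m := by
    simpa [h.pow_three_int] using h.trace_int m 0 0
  have h4 : Algebra.trace ℤ (𝓞 K) (t ^ 4) = 0 := by
    simpa [pow_succ t 3, h.pow_three_int] using h.trace_int 0 m 0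
  have htr : Algebra.traceMatrix ℤ (fun i : Fin 3 ↦ t ^ (i : ℕ)) =
      !![3, 0, 0; 0, 0, 3 * m; 0, 3 * m, 0] := by
    ext i j
    rw [Algebra.traceMatrix_apply, Algebra.traceForm_apply, ← pow_add]
    fin_cases i <;> fin_cases j <;> simp [h0, h1, h2, h3, h4]
  rw [Algebra.discr_def, htr, Matrix.det_fin_three]
  simp only [Matrix.of_apply, Matrix.cons_val', Matrix.cons_val_fin_one, Matrix.cons_val]
  ring

theorem exists_sq_mul_discr_eq (h : IsPureCubic (m : ℚ) (t : K)) :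
    ∃ n : ℤ, n ^ 2 * discr K = -27 * m ^ 2 := by
  obtain ⟨n, hn⟩ := exists_discr_eq_sq_mul (fun i : Fin 3 ↦ t ^ (i : ℕ)) (by simp [h.finrank_eq])
  exact ⟨n, by rw [← hn, h.discr_pow]⟩

theorem discr_neg (h : IsPureCubic (m : ℚ) (t : K)) : discr K < 0 := by
  obtain ⟨n, hn⟩ := h.exists_sq_mul_discr_eq
  have hm : m ≠ 0 := Int.cast_ne_zero.mp h.ne_zero
  refine neg_of_mul_neg_right (a := n ^ 2) ?_ (sq_nonneg n)
  rw [hn]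
  have : 0 < m ^ 2 := by positivity
  linarith

theorem abs_discr_le (h : IsPureCubic (m : ℚ) (t : K)) : |discr K| ≤ 27 * m ^ 2 := by
  obtain ⟨n, hn⟩ := h.exists_sq_mul_discr_eq
  have hn0 : n ≠ 0 := fun hn0 ↦ Int.cast_ne_zero.mp h.ne_zero (by simpa [hn0] using hn)
  rw [abs_of_neg h.discr_neg]
  nlinarith [h.discr_neg, sq_pos_of_ne_zero hn0]

theorem nrComplexPlaces_eq_one (h : IsPureCubic (m : ℚ) (t : K)) :
    InfinitePlace.nrComplexPlaces K = 1 := by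
  have hsign := sign_discr K
  rw [Int.sign_eq_neg_one_of_neg h.discr_neg] at hsign
  have hne : InfinitePlace.nrComplexPlaces K ≠ 0 := fun h0 ↦ by simp [h0] at hsign
  have := InfinitePlace.card_add_two_mul_card_eq_rank K
  rw [h.finrank_eq] at this
  lia

theorem units_rank_eq_one (h : IsPureCubic (m : ℚ) (t : K)) : Units.rank K = 1 := by
  have := InfinitePlace.card_add_two_mul_card_eq_rank K
  rw [h.finrank_eq, h.nrComplexPlaces_eq_one] at this
  rw [Units.rank, InfinitePlace.card_eq_nrRealPlaces_add_nrComplexPlaces,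
    h.nrComplexPlaces_eq_one]
  lia

theorem isPrincipal_of_mem (h : IsPureCubic (m : ℚ) (t : K)) {P : Ideal (𝓞 K)} (hP : P ≠ ⊤)
    (a b c : ℤ) (hp : (pureCubicNorm m a b c).natAbs.Prime) {g : 𝓞 K}
    (hg : g = a + b * t + c * t ^ 2) (hgP : g ∈ P) : P.IsPrincipal := by
  refine isPrincipal_of_mem_of_prime_norm hP ?_ hgP
  rwa [hg, h.norm_int]

end RingOfIntegers

end IsPureCubic

theorem rat_pow_three_ne_six (r : ℚ) : r ^ 3 ≠ (6 : ℤ) := by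
  intro hr
  have h6 : padicValInt 2 6 = 1 := by
    rw [show (6 : ℤ) = 2 * 3 by norm_num, padicValInt.mul two_ne_zero three_ne_zero,
      padicValInt.eq_zero_of_not_dvd (z := 3) (by decide)]
    exact congrArg (· + 0) (padicValInt.self one_lt_two)
  have := congrArg (padicValRat 2) hr
  rw [padicValRat.pow, padicValRat.of_int, h6] at this
  lia

theorem pow_three_ne_two_of_absNorm_eq_seven {K : Type*} [Field K] [NumberField K]
    {P : Ideal (𝓞 K)} [hP : P.IsPrime] (h7 : Ideal.absNorm P = 7) (x : 𝓞 K) : x ^ 3 ≠ 2 := by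
  intro hx
  have hbot : P ≠ ⊥ := by rintro rfl; simp at h7
  have hmem : (7 : 𝓞 K) ∈ P := by simpa [h7] using Ideal.absNorm_mem P
  have hfrob : x ^ 7 - x ∈ P := h7 ▸ pow_absNorm_sub_self_mem hbot x
  have : (1 : 𝓞 K) = 7 - x ^ 2 * (x ^ 7 - x) := by
    linear_combination (x ^ 6 + 2 * x ^ 3 + 3) * hx
  exact hP.ne_top <| P.eq_top_iff_one.mpr <| this ▸ P.sub_mem hmem (P.mul_mem_left _ hfrob)

namespace IsPureCubic

section CubeRootOfSix

variable {K : Type*} [Field K] [NumberField K] {t : 𝓞 K}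

theorem pow_three_eq_six (h : IsPureCubic ((6 : ℤ) : ℚ) (t : K)) : t ^ 3 = 6 := by
  simpa using h.pow_three_int

variable {P : Ideal (𝓞 K)}

theorem isPrincipal_of_two_mem (h : IsPureCubic ((6 : ℤ) : ℚ) (t : K)) [hP : P.IsPrime]
    (h2 : (2 : 𝓞 K) ∈ P) : P.IsPrincipal := by
  refine h.isPrincipal_of_mem hP.ne_top 2 (-1) 0 (by norm_num [pureCubicNorm]) (g := 2 - t)
    (by push_cast; ring) (hP.mem_of_pow_mem 3 ?_)
  have : (2 - t) ^ 3 = (1 - 6 * t + 3 * t ^ 2) * 2 := by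
    linear_combination -h.pow_three_eq_six
  exact this ▸ P.mul_mem_left _ h2

theorem isPrincipal_of_three_mem (h : IsPureCubic ((6 : ℤ) : ℚ) (t : K)) [hP : P.IsPrime]
    (h3 : (3 : 𝓞 K) ∈ P) : P.IsPrincipal := by
  have ht : t ∈ P := by
    refine hP.mem_of_pow_mem 3 ?_
    rw [h.pow_three_eq_six, show (6 : 𝓞 K) = 2 * 3 by norm_num]
    exact P.mul_mem_left _ h3
  exact h.isPrincipal_of_mem hP.ne_top 3 2 1 (by norm_num [pureCubicNorm])
    (g := 3 + (2 + t) * t) (by push_cast; ring) (P.add_mem h3 (P.mul_mem_left _ ht))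

theorem isPrincipal_of_absNorm_eq_five (h : IsPureCubic ((6 : ℤ) : ℚ) (t : K)) [hP : P.IsPrime]
    (h5 : Ideal.absNorm P = 5) : P.IsPrincipal := by
  have hmem : (5 : 𝓞 K) ∈ P := by simpa [h5] using Ideal.absNorm_mem P
  have hbot : P ≠ ⊥ := by rintro rfl; simp at h5
  refine h.isPrincipal_of_mem hP.ne_top (-1) 1 0 (by norm_num [pureCubicNorm]) (g := t - 1)
    (by push_cast; ring) ?_
  have hfrob : t ^ 5 - t ∈ P := h5 ▸ pow_absNorm_sub_self_mem hbot t
  have : t - 1 = t ^ 2 * (t ^ 5 - t) - (7 * t - 1) * 5 := by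
    linear_combination -(t ^ 4 + 6 * t - 1) * h.pow_three_eq_six
  exact this ▸ P.sub_mem (P.mul_mem_left _ hfrob) (P.mul_mem_left _ hmem)

theorem isPrincipal_of_seven_mem (h : IsPureCubic ((6 : ℤ) : ℚ) (t : K)) [hP : P.IsPrime]
    (h7 : (7 : 𝓞 K) ∈ P) : P.IsPrincipal := by
  have hfac : (t + 1) * ((t - 3) * (t - 5)) ∈ P := by
    have : (t + 1) * ((t - 3) * (t - 5)) = (3 + t - t ^ 2) * 7 := by
      linear_combination h.pow_three_eq_six
    exact this ▸ P.mul_mem_left _ h7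
  rcases hP.mem_or_mem hfac with ht | hfac
  · exact h.isPrincipal_of_mem hP.ne_top 1 1 0 (by norm_num [pureCubicNorm])
      (by push_cast; ring) ht
  rcases hP.mem_or_mem hfac with ht | ht
  · exact h.isPrincipal_of_mem hP.ne_top (-5) 1 1 (by norm_num [pureCubicNorm])
      (g := (t + 4) * (t - 3) + 7) (by push_cast; ring) (P.add_mem (P.mul_mem_left _ ht) h7)
  · exact h.isPrincipal_of_mem hP.ne_top 7 (-2) (-1) (by norm_num [pureCubicNorm])
      (g := (-t - 7) * (t - 5) + (-4) * 7) (by push_cast; ring)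
      (P.add_mem (P.mul_mem_left _ ht) (P.mul_mem_left _ h7))

theorem minkowskiBound_lt_nine (h : IsPureCubic ((6 : ℤ) : ℚ) (t : K)) :
    (4 / Real.pi) ^ InfinitePlace.nrComplexPlaces K *
      ((finrank ℚ K).factorial / (finrank ℚ K) ^ (finrank ℚ K) * √|(discr K : ℝ)|) < 9 := by
  rw [h.nrComplexPlaces_eq_one, h.finrank_eq]
  have hdiscr : |(discr K : ℝ)| ≤ 972 := by exact_mod_cast h.abs_discr_le
  have hsqrt : √|(discr K : ℝ)| ≤ 31.2 := by
    rw [Real.sqrt_le_left (by norm_num)]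
    linarith
  have hpi : 4 / Real.pi ≤ 1.28 := by
    rw [div_le_iff₀ Real.pi_pos]
    linarith [Real.pi_gt_d2]
  calc _ ≤ (1.28 : ℝ) ^ 1 * ((Nat.factorial 3 : ℕ) / (3 : ℕ) ^ 3 * 31.2) := by gcongr
    _ < 9 := by norm_num [Nat.factorial]

theorem isPrincipal_of_absNorm_lt_nine (h : IsPureCubic ((6 : ℤ) : ℚ) (t : K))
    [hP : P.IsPrime] (hbot : P ≠ ⊥) (hlt : Ideal.absNorm P < 9) : P.IsPrincipal := by
  have hmem := Ideal.absNorm_mem P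
  have h0 : Ideal.absNorm P ≠ 0 := by simpa [Ideal.absNorm_eq_zero_iff] using hbot
  have h1 : Ideal.absNorm P ≠ 1 := by simpa [Ideal.absNorm_eq_one_iff] using hP.ne_top
  have h2 (k : ℕ) (hk : Ideal.absNorm P = 2 ^ k) : P.IsPrincipal :=
    h.isPrincipal_of_two_mem (hP.mem_of_pow_mem k (by simpa [hk] using hmem))
  have h6 (hn : Ideal.absNorm P = 6) : P.IsPrincipal := by
    have : (Ideal.absNorm P : 𝓞 K) = 2 * 3 := by rw [hn]; norm_num
    exact (hP.mem_or_mem (this ▸ hmem)).elim h.isPrincipal_of_two_mem h.isPrincipal_of_three_mem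
  have hcases : Ideal.absNorm P ∈ ({2, 3, 4, 5, 6, 7, 8} : Set ℕ) := by
    simp only [Set.mem_insert_iff, Set.mem_singleton_iff]
    lia
  rcases hcases with hn | hn | hn | hn | hn | hn | hn
  · exact h2 1 hn
  · exact h.isPrincipal_of_three_mem (by simpa [hn] using hmem)
  · exact h2 2 hn
  · exact h.isPrincipal_of_absNorm_eq_five hn
  · exact h6 hn
  · exact h.isPrincipal_of_seven_mem (by simpa [hn] using hmem)
  · exact h2 3 hn

theorem isPrincipalIdealRing (h : IsPureCubic ((6 : ℤ) : ℚ) (t : K)) :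
    IsPrincipalIdealRing (𝓞 K) := by
  refine RingOfIntegers.isPrincipalIdealRing_of_isPrincipal_of_norm_le_of_isPrime ?_
  rintro ⟨P, hP0⟩ hP hN
  exact h.isPrincipal_of_absNorm_lt_nine (nonZeroDivisors.ne_zero hP0)
    (by exact_mod_cast hN.trans_lt h.minkowskiBound_lt_nine)

theorem pow_three_ne_two (h : IsPureCubic ((6 : ℤ) : ℚ) (t : K)) (x : 𝓞 K) : x ^ 3 ≠ 2 := by
  have h7 : Ideal.absNorm (Ideal.span {t + 1}) = 7 := by
    have : t + 1 = ((1 : ℤ) : 𝓞 K) + (1 : ℤ) * t + (0 : ℤ) * t ^ 2 := by push_cast; ring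
    rw [Ideal.absNorm_span_singleton, this, h.norm_int]
    norm_num [pureCubicNorm]
  have : (Ideal.span {t + 1}).IsPrime :=
    Ideal.isPrime_of_irreducible_absNorm (h7 ▸ Nat.prime_seven)
  exact pow_three_ne_two_of_absNorm_eq_seven h7 x

end CubeRootOfSix

end IsPureCubic

section Units

theorem exists_eq_pow_mul_zpow_of_pow_ne {G : Type*} [CommGroup G] {p : ℕ} (hp : p.Prime)
    {η ε : G} (hη : ∀ u : G, ∃ (s : G) (k : ℤ), u = s ^ p * η ^ k) (hε : ∀ s : G, s ^ p ≠ ε)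
    (u : G) : ∃ (s : G) (k : ℤ), u = s ^ p * ε ^ k := by
  obtain ⟨s, n, hn⟩ := hη ε
  have hpn : ¬ (p : ℤ) ∣ n := by
    rintro ⟨q, rfl⟩
    exact hε (s * η ^ q) (by rw [hn, mul_pow, ← zpow_natCast (η ^ q), ← zpow_mul, mul_comm q])
  obtain ⟨a, b, hab⟩ : IsCoprime (p : ℤ) n :=
    (Nat.prime_iff_prime_int.mp hp).coprime_iff_not_dvd.mpr hpn
  have hηn : η ^ n = s⁻¹ ^ p * ε := by rw [hn, inv_pow, inv_mul_cancel_left]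
  obtain ⟨w, hw⟩ : ∃ w, η = w ^ p * ε ^ b := by
    refine ⟨η ^ a * s⁻¹ ^ b, ?_⟩
    calc η = η ^ (a * p + b * n) := by rw [hab, zpow_one]
      _ = (η ^ a) ^ p * (η ^ n) ^ b := by
        rw [zpow_add, zpow_mul, zpow_natCast, mul_comm b, zpow_mul]
      _ = (η ^ a * s⁻¹ ^ b) ^ p * ε ^ b := by
        rw [hηn, mul_zpow, mul_pow, ← zpow_natCast s⁻¹, zpow_comm, zpow_natCast, mul_assoc]
  obtain ⟨r, k, rfl⟩ := hη u
  refine ⟨r * w ^ k, b * k, ?_⟩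
  rw [mul_pow, zpow_mul, mul_assoc, ← zpow_natCast (w ^ k), zpow_comm, zpow_natCast, ← mul_zpow,
    ← hw]

variable {K : Type*} [Field K] [NumberField K]

theorem exists_eq_mul_zpow_of_units_rank_eq_one (hrank : Units.rank K = 1) :
    ∃ η : (𝓞 K)ˣ, ∀ u, ∃ (ζ : Units.torsion K) (k : ℤ), u = ζ * η ^ k := by
  let : Unique (Fin (Units.rank K)) := by rw [hrank]; infer_instance
  refine ⟨Units.fundSystem K default, fun u ↦ ?_⟩
  obtain ⟨⟨ζ, e⟩, he, -⟩ := Units.exist_unique_eq_mul_prod K u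
  exact ⟨ζ, e default, by rw [he, Fintype.prod_unique]⟩

theorem exists_eq_pow_mul_zpow_of_units_rank_eq_one (hrank : Units.rank K = 1)
    (hodd : Odd (finrank ℚ K)) {n : ℕ} (hn : Odd n) :
    ∃ η : (𝓞 K)ˣ, ∀ u, ∃ (s : (𝓞 K)ˣ) (k : ℤ), u = s ^ n * η ^ k := by
  obtain ⟨η, hη⟩ := exists_eq_mul_zpow_of_units_rank_eq_one hrank
  refine ⟨η, fun u ↦ ?_⟩
  obtain ⟨ζ, k, rfl⟩ := hη u
  refine ⟨ζ, k, ?_⟩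
  rcases Units.torsion_eq_one_or_neg_one_of_odd_finrank hodd ζ with hζ | hζ <;>
    simp [hζ, hn.neg_one_pow]

end Units

namespace IsPureCubic

section CubeRootOfSixUnits

variable {K : Type*} [Field K] [NumberField K] {t : 𝓞 K}

theorem exists_unit_two_mul_eq (h : IsPureCubic ((6 : ℤ) : ℚ) (t : K)) :
    ∃ ε : (𝓞 K)ˣ, 2 * (ε : 𝓞 K) = (2 - t) ^ 3 := by
  refine ⟨.mkOfMulEqOne (1 - 6 * t + 3 * t ^ 2) (109 + 60 * t + 33 * t ^ 2) ?_, ?_⟩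
  · linear_combination (-18 + 99 * t) * h.pow_three_eq_six
  · rw [Units.val_mkOfMulEqOne]
    linear_combination h.pow_three_eq_six

theorem exists_unit_eq_pow_three_mul_zpow (h : IsPureCubic ((6 : ℤ) : ℚ) (t : K))
    {ε : (𝓞 K)ˣ} (hε : 2 * (ε : 𝓞 K) = (2 - t) ^ 3) (u : (𝓞 K)ˣ) :
    ∃ (s : (𝓞 K)ˣ) (k : ℤ), u = s ^ 3 * ε ^ k := by
  obtain ⟨η, hη⟩ := exists_eq_pow_mul_zpow_of_units_rank_eq_one h.units_rank_eq_one
    (by rw [h.finrank_eq]; decide) (n := 3) (by decide)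
  refine exists_eq_pow_mul_zpow_of_pow_ne Nat.prime_three hη (fun s hs ↦ ?_) u
  refine h.pow_three_ne_two ((2 - t) * ↑s⁻¹) ?_
  rw [mul_pow, ← hε, ← hs, Units.val_pow_eq_pow_val, mul_assoc, ← mul_pow, s.mul_inv, one_pow,
    mul_one]

theorem unit_eq_smul_pow_three (h : IsPureCubic ((6 : ℤ) : ℚ) (t : K)) (u : (𝓞 K)ˣ) :
    ∃ (m : ℚ) (v : K), m ≠ 0 ∧ (u : K) = m • v ^ 3 := by
  obtain ⟨ε, hε⟩ := h.exists_unit_two_mul_eq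
  obtain ⟨s, k, rfl⟩ := h.exists_unit_eq_pow_three_mul_zpow hε u
  have hεK : (ε : K) = 2⁻¹ * (2 - (t : K)) ^ 3 := by
    have := congrArg (algebraMap (𝓞 K) K) hε
    rw [map_mul, map_pow, map_sub, map_ofNat] at this
    exact (eq_inv_mul_iff_mul_eq₀ two_ne_zero).mpr this
  refine ⟨2⁻¹ ^ k, s * (2 - (t : K)) ^ k, by positivity, ?_⟩
  rw [Units.coe_mul, Units.coe_pow, Units.coe_zpow, hεK, mul_zpow, mul_pow,
    ← zpow_natCast (2 - (t : K)), zpow_comm, zpow_natCast, Algebra.smul_def, map_zpow₀, map_inv₀,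
    map_ofNat, mul_left_comm]

theorem exists_eq_smul_pow_three_of_mul_eq_pow (h : IsPureCubic ((6 : ℤ) : ℚ) (t : K))
    {α β γ : 𝓞 K} (hcop : IsCoprime α β) (hαβ : α * β = γ ^ 3) :
    ∃ (m : ℚ) (g : K), m ≠ 0 ∧ (α : K) = m • g ^ 3 := by
  have := h.isPrincipalIdealRing
  obtain ⟨d, u, rfl⟩ := exists_associated_pow_of_mul_eq_pow' hcop hαβ
  obtain ⟨m, v, hm, hv⟩ := h.unit_eq_smul_pow_three u
  refine ⟨m, d * v, hm, ?_⟩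
  rw [RingOfIntegers.coe_eq_algebraMap, map_mul, map_pow, hv, mul_pow, mul_smul_comm]

end CubeRootOfSixUnits

end IsPureCubic

/-- The `θ²`-coordinate of `(θ - 1)(2 - θ)(a + bθ + cθ²)³` when `θ³ = 6`. -/
def twistedCubeCoeff {R : Type*} [CommRing R] (a b c : R) : R :=
  9 * (a ^ 2 * b + 6 * b ^ 2 * c + 6 * a * c ^ 2) - 6 * (a ^ 2 * c + a * b ^ 2 + 6 * b * c ^ 2) -
    (a ^ 3 + 6 * b ^ 3 + 36 * c ^ 3 + 36 * a * b * c)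

theorem three_dvd_of_twistedCubeCoeff_eq_zero {a b c : ℤ} (h : twistedCubeCoeff a b c = 0) :
    3 ∣ a ∧ 3 ∣ b ∧ 3 ∣ c := by
  rw [twistedCubeCoeff] at h
  have h3 : Prime (3 : ℤ) := Int.prime_three
  have ha : (3 : ℤ) ∣ a := by
    refine h3.dvd_of_dvd_pow (n := 3) ⟨3 * (a ^ 2 * b + 6 * b ^ 2 * c + 6 * a * c ^ 2) -
      2 * (a ^ 2 * c + a * b ^ 2 + 6 * b * c ^ 2) - 2 * b ^ 3 - 12 * c ^ 3 - 12 * a * b * c, ?_⟩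
    linear_combination -h
  obtain ⟨a, rfl⟩ := ha
  have hb : (3 : ℤ) ∣ b := by
    have : (3 : ℤ) ∣ 2 * b ^ 3 :=
      ⟨3 * (3 * a ^ 2 * b + 2 * b ^ 2 * c + 6 * a * c ^ 2) -
        2 * (3 * a ^ 2 * c + a * b ^ 2 + 2 * b * c ^ 2) - 3 * a ^ 3 - 4 * c ^ 3 - 12 * a * b * c,
        by linarith⟩
    exact h3.dvd_of_dvd_pow ((h3.dvd_or_dvd this).resolve_left (by decide))
  obtain ⟨b, rfl⟩ := hb
  have hc : (3 : ℤ) ∣ c := by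
    have : (3 : ℤ) ∣ 4 * c ^ 3 :=
      ⟨3 * (3 * a ^ 2 * b + 6 * b ^ 2 * c + 2 * a * c ^ 2) -
        2 * (a ^ 2 * c + 3 * a * b ^ 2 + 2 * b * c ^ 2) - a ^ 3 - 6 * b ^ 3 - 12 * a * b * c,
        by linarith⟩
    exact h3.dvd_of_dvd_pow ((h3.dvd_or_dvd this).resolve_left (by decide))
  exact ⟨dvd_mul_right 3 a, dvd_mul_right 3 b, hc⟩

theorem eq_zero_of_twistedCubeCoeff_eq_zero {a b c : ℚ} (h : twistedCubeCoeff a b c = 0) :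
    a = 0 ∧ b = 0 ∧ c = 0 := by
  by_contra h0
  obtain ⟨r, a, b, c, hr, hprim, rfl, rfl, rfl⟩ := exists_primitive_integer_triple h0
  have hhom : twistedCubeCoeff (r * a) (r * b) (r * c) = r ^ 3 * (twistedCubeCoeff a b c : ℤ) := by
    simp only [twistedCubeCoeff]
    push_cast
    ring
  rw [hhom, mul_eq_zero_iff_left (pow_ne_zero 3 hr), Int.cast_eq_zero] at h
  obtain ⟨ha, hb, hc⟩ := three_dvd_of_twistedCubeCoeff_eq_zero h
  exact Int.prime_three.not_isUnit (hprim 3 ha hb hc)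

theorem IsPureCubic.eq_zero_of_mul_pow_three_eq {L : Type*} [Field L] [Algebra ℚ L] {θ g : L}
    (h : IsPureCubic ((6 : ℤ) : ℚ) θ) {x y : ℚ}
    (hg : (θ - 1) * (2 - θ) * g ^ 3 = x • 1 + y • θ) : g = 0 := by
  obtain ⟨a, b, c, rfl⟩ := h.exists_coords g
  have htwist : (θ - 1) * (2 - θ) = (-2 : ℚ) • (1 : L) + (3 : ℚ) • θ + (-1 : ℚ) • θ ^ 2 := by
    simp only [Algebra.smul_def, map_neg, map_one, map_ofNat]
    ring
  have hxy : x • (1 : L) + y • θ = x • 1 + y • θ + (0 : ℚ) • θ ^ 2 := by rw [zero_smul, add_zero]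
  rw [htwist, hxy, _root_.pow_three] at hg
  simp only [h.mul_coords] at hg
  have hcoord := congrArg (h.basis.repr · 2) hg
  simp only [h.repr_eq] at hcoord
  obtain ⟨rfl, rfl, rfl⟩ : a = 0 ∧ b = 0 ∧ c = 0 := by
    refine eq_zero_of_twistedCubeCoeff_eq_zero ?_
    rw [twistedCubeCoeff]
    simp only [Int.cast_ofNat, Matrix.cons_val] at hcoord
    linear_combination hcoord
  simp

section Factorisation

variable {S : Type*} [CommRing S] {t y k z : S}

/-- The quotient of `2y + xt`, where `x = 5k - 2y` and `t³ = 6`, by `(t - 1)(2 - t)`. -/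
def selmerFactor (t y k : S) : S :=
  (21 * k - 4 * y) + (11 * k - 2 * y) * t + (6 * k - y) * t ^ 2

/-- The product of the two conjugates of `selmerFactor t y k` over `ℚ`, when `t³ = 6`. -/
def selmerCofactor (t y k : S) : S :=
  (45 * k ^ 2 - 30 * k * y + 4 * y ^ 2) + (-15 * k ^ 2 + 14 * k * y - 2 * y ^ 2) * t +
    (k * y - 5 * k ^ 2) * t ^ 2

theorem mul_selmerFactor (ht : t ^ 3 = 6) :
    (t - 1) * (2 - t) * selmerFactor t y k = 2 * y + (5 * k - 2 * y) * t := by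
  rw [selmerFactor]
  linear_combination (3 * (6 * k - y) - (11 * k - 2 * y) - (6 * k - y) * t) * ht

theorem mul_selmerCofactor (ht : t ^ 3 = 6) :
    (t ^ 2 + t + 1) * (t ^ 2 + 2 * t + 4) * selmerCofactor t y k =
      (2 * y) ^ 2 - 2 * y * (5 * k - 2 * y) * t + (5 * k - 2 * y) ^ 2 * t ^ 2 := by
  rw [selmerCofactor]
  linear_combination ((t + 3) * (45 * k ^ 2 - 30 * k * y + 4 * y ^ 2 +
    (-15 * k ^ 2 + 14 * k * y - 2 * y ^ 2) * t + (k * y - 5 * k ^ 2) * t ^ 2) +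
    7 * (k * y - 5 * k ^ 2) * t + 7 * (-15 * k ^ 2 + 14 * k * y - 2 * y ^ 2) +
    12 * (k * y - 5 * k ^ 2)) * ht

theorem five_mul_selmerFactor_mul_selmerCofactor (ht : t ^ 3 = 6) :
    5 * (selmerFactor t y k * selmerCofactor t y k) = 3 * (5 * k - 2 * y) ^ 3 + 4 * y ^ 3 := by
  rw [selmerFactor, selmerCofactor]
  linear_combination 5 * ((11 * k - 2 * y) * (k * y - 5 * k ^ 2) +
    (6 * k - y) * (-15 * k ^ 2 + 14 * k * y - 2 * y ^ 2) +
    (6 * k - y) * (k * y - 5 * k ^ 2) * t) * ht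

theorem isCoprime_selmerFactor_selmerCofactor (ht : t ^ 3 = 6)
    (hxy : IsCoprime (2 * y) (5 * k - 2 * y)) (hz : IsCoprime 18 z)
    (hprod : selmerFactor t y k * selmerCofactor t y k = (-z) ^ 3) :
    IsCoprime (selmerFactor t y k) (selmerCofactor t y k) := by
  have hL := mul_selmerFactor (y := y) (k := k) ht
  have hM := mul_selmerCofactor (y := y) (k := k) ht
  generalize selmerFactor t y k = α at *
  generalize selmerCofactor t y k = β at *
  generalize 5 * k - 2 * y = x at *
  obtain ⟨p, q, hpq⟩ : IsCoprime ((2 * y) ^ 2) (x ^ 2) := hxy.pow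
  obtain ⟨r, s, hrs⟩ : IsCoprime 18 (z ^ 3) := hz.pow_right
  let I := Ideal.span {α, β}
  have hLI : 2 * y + x * t ∈ I := hL ▸ I.mul_mem_left _ (Ideal.subset_span (by simp))
  have hMI : (2 * y) ^ 2 - 2 * y * x * t + x ^ 2 * t ^ 2 ∈ I :=
    hM ▸ I.mul_mem_left _ (Ideal.subset_span (by simp))
  have hyI : 3 * (2 * y) ^ 2 ∈ I := by
    convert I.add_mem hMI (I.mul_mem_left (4 * y - x * t) hLI) using 1
    ring
  have hxI : 3 * x ^ 2 * t ^ 2 ∈ I := by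
    convert I.add_mem hMI (I.mul_mem_left (2 * x * t - 2 * y) hLI) using 1
    ring
  have h18 : 18 ∈ I := by
    convert I.add_mem (I.mul_mem_left (6 * p) hyI) (I.mul_mem_left (q * t) hxI) using 1
    linear_combination -18 * hpq - (3 * q * x ^ 2) * ht
  have hzI : z ^ 3 ∈ I := by
    convert I.mul_mem_left (-β) (Ideal.subset_span (show α ∈ {α, β} by simp)) using 1
    linear_combination hprod
  exact Ideal.mem_span_pair.mp <|
    hrs ▸ I.add_mem (I.mul_mem_left r h18) (I.mul_mem_left s hzI)

end Factorisation

theorem IsPureCubic.eq_zero_of_selmer_prod_eq {K : Type*} [Field K] [NumberField K] {t : 𝓞 K}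
    (h : IsPureCubic ((6 : ℤ) : ℚ) (t : K)) {y k z : ℤ}
    (hcop : IsCoprime (selmerFactor t (y : 𝓞 K) k) (selmerCofactor t (y : 𝓞 K) k))
    (hprod : selmerFactor t (y : 𝓞 K) k * selmerCofactor t (y : 𝓞 K) k = (-z) ^ 3) : z = 0 := by
  obtain ⟨m, g, hm, hg⟩ := h.exists_eq_smul_pow_three_of_mul_eq_pow hcop hprod
  have hlinear : ((t : K) - 1) * (2 - t) * g ^ 3 =
      (m⁻¹ * (2 * y)) • 1 + (m⁻¹ * (5 * k - 2 * y)) • (t : K) := by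
    have hfac := congrArg (algebraMap (𝓞 K) K)
      (mul_selmerFactor (y := (y : 𝓞 K)) (k := k) h.pow_three_eq_six)
    rw [map_mul, ← RingOfIntegers.coe_eq_algebraMap (selmerFactor _ _ _), hg] at hfac
    simp only [map_ofNat, map_mul, map_add, map_sub, map_one, map_intCast] at hfac
    rw [← inv_smul_smul₀ hm (g ^ 3), mul_smul_comm]
    simp only [mul_smul, ← smul_add]
    congr 1
    simpa [Algebra.smul_def] using hfac
  have hg0 : g = 0 := h.eq_zero_of_mul_pow_three_eq hlinear
  have hα : selmerFactor t (y : 𝓞 K) k = 0 :=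
    RingOfIntegers.coe_injective <| by
      rw [← RingOfIntegers.coe_eq_algebraMap, hg, hg0, zero_pow three_ne_zero, smul_zero, map_zero]
  rw [hα, zero_mul, eq_comm, pow_eq_zero_iff three_ne_zero, neg_eq_zero] at hprod
  exact_mod_cast hprod

/-- A solution of Selmer's equation in integers without a common factor; every nonzero rational
solution is proportional to one. -/
structure IsPrimitiveSelmerSolution (x y z : ℤ) : Prop where
  equation : 3 * x ^ 3 + 4 * y ^ 3 + 5 * z ^ 3 = 0
  isUnit_of_dvd : ∀ d : ℤ, d ∣ x → d ∣ y → d ∣ z → IsUnit d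

namespace IsPrimitiveSelmerSolution

variable {x y z : ℤ}

theorem isCoprime (h : IsPrimitiveSelmerSolution x y z) : IsCoprime y x := by
  refine isCoprime_of_prime_dvd ?_ fun p hp hpy hpx ↦ hp.not_isUnit (h.isUnit_of_dvd p hpx hpy ?_)
  · rintro ⟨rfl, rfl⟩
    have hz : z = 0 := by simpa using h.equation
    exact not_isUnit_zero (h.isUnit_of_dvd 0 dvd_rfl dvd_rfl hz.symm.dvd)
  have hd : p ^ 3 ∣ 5 * z ^ 3 := by
    rw [← (dvd_add_right <| ((pow_dvd_pow_of_dvd hpx 3).mul_left 3).add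
      ((pow_dvd_pow_of_dvd hpy 3).mul_left 4)), h.equation]
    exact dvd_zero _
  by_contra hpz
  have hcop : IsCoprime (p ^ 3) (z ^ 3) := (hp.coprime_iff_not_dvd.mpr hpz).pow
  have h5 : Prime (5 : ℤ) := Nat.prime_iff_prime_int.mp Nat.prime_five
  exact hp.not_isUnit <| h5.irreducible.squarefree p <|
    (Dvd.intro p (by ring)).trans (hcop.dvd_of_dvd_mul_right hd)

theorem not_two_dvd_left (h : IsPrimitiveSelmerSolution x y z) : ¬2 ∣ x := by
  rintro ⟨a, rfl⟩
  have hz : (2 : ℤ) ∣ z := by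
    have : (2 : ℤ) ∣ 5 * z ^ 3 := ⟨-(12 * a ^ 3 + 2 * y ^ 3), by linear_combination h.equation⟩
    exact Int.prime_two.dvd_of_dvd_pow ((Int.prime_two.dvd_or_dvd this).resolve_left (by decide))
  obtain ⟨c, rfl⟩ := hz
  have hy : (2 : ℤ) ∣ y := Int.prime_two.dvd_of_dvd_pow (n := 3)
    ⟨-(3 * a ^ 3 + 5 * c ^ 3), by linarith [h.equation]⟩
  exact Int.prime_two.not_isUnit (h.isUnit_of_dvd 2 (by simp) hy (by simp))

theorem not_two_dvd_right (h : IsPrimitiveSelmerSolution x y z) : ¬2 ∣ z := by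
  rintro ⟨c, rfl⟩
  have : (2 : ℤ) ∣ 3 * x ^ 3 := ⟨-(20 * c ^ 3 + 2 * y ^ 3), by linear_combination h.equation⟩
  exact h.not_two_dvd_left <|
    Int.prime_two.dvd_of_dvd_pow ((Int.prime_two.dvd_or_dvd this).resolve_left (by decide))

theorem not_three_dvd_right (h : IsPrimitiveSelmerSolution x y z) : ¬3 ∣ z := by
  rintro ⟨c, rfl⟩
  have hy : (3 : ℤ) ∣ y := by
    have : (3 : ℤ) ∣ 4 * y ^ 3 := ⟨-(x ^ 3 + 45 * c ^ 3), by linear_combination h.equation⟩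
    exact Int.prime_three.dvd_of_dvd_pow
      ((Int.prime_three.dvd_or_dvd this).resolve_left (by decide))
  obtain ⟨b, rfl⟩ := hy
  have hx : (3 : ℤ) ∣ x := Int.prime_three.dvd_of_dvd_pow (n := 3)
    ⟨-(12 * b ^ 3 + 15 * c ^ 3), by linarith [h.equation]⟩
  exact Int.prime_three.not_isUnit (h.isUnit_of_dvd 3 hx (by simp) (by simp))

theorem exists_eq_five_mul_sub (h : IsPrimitiveSelmerSolution x y z) :
    ∃ k, x = 5 * k - 2 * y := by
  have key : ∀ x y z : ZMod 5, 3 * x ^ 3 + 4 * y ^ 3 + 5 * z ^ 3 = 0 → x + 2 * y = 0 := by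
    decide
  have hmod : ((x + 2 * y : ℤ) : ZMod 5) = 0 := by
    exact_mod_cast key x y z (by exact_mod_cast congrArg (Int.cast : ℤ → ZMod 5) h.equation)
  obtain ⟨k, hk⟩ := (ZMod.intCast_zmod_eq_zero_iff_dvd _ 5).mp hmod
  exact ⟨k, eq_sub_of_add_eq hk⟩

theorem false (h : IsPrimitiveSelmerSolution x y z) : False := by
  obtain ⟨k, rfl⟩ := h.exists_eq_five_mul_sub
  obtain ⟨K, _, _, t, hK⟩ := IsPureCubic.exists_numberField rat_pow_three_ne_six
  have h2x : IsCoprime 2 (5 * k - 2 * y) :=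
    Int.prime_two.coprime_iff_not_dvd.mpr h.not_two_dvd_left
  have h2z : IsCoprime 2 z := Int.prime_two.coprime_iff_not_dvd.mpr h.not_two_dvd_right
  have h3z : IsCoprime 3 z := Int.prime_three.coprime_iff_not_dvd.mpr h.not_three_dvd_right
  have hxy : IsCoprime (2 * y : 𝓞 K) (5 * k - 2 * y) := by
    simpa using (h2x.mul_left h.isCoprime).map (Int.castRingHom (𝓞 K))
  have h18z : IsCoprime (18 : 𝓞 K) z := by
    have h18 : IsCoprime 18 z := h2z.mul_left (h3z.mul_left h3z)
    simpa using h18.map (Int.castRingHom (𝓞 K))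
  have hprod : selmerFactor t (y : 𝓞 K) k * selmerCofactor t (y : 𝓞 K) k = (-z) ^ 3 := by
    have heq := congrArg (Int.cast : ℤ → 𝓞 K) h.equation
    push_cast at heq
    refine mul_left_cancel₀ (a := (5 : 𝓞 K)) (by norm_num) ?_
    rw [five_mul_selmerFactor_mul_selmerCofactor hK.pow_three_eq_six]
    linear_combination heq
  have hz0 : z = 0 := hK.eq_zero_of_selmer_prod_eq
    (isCoprime_selmerFactor_selmerCofactor hK.pow_three_eq_six hxy h18z hprod) hprod
  exact h.not_two_dvd_right (hz0 ▸ dvd_zero 2)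

end IsPrimitiveSelmerSolution

/-- Selmer's example: `3x³ + 4y³ + 5z³ = 0` has no nontrivial rational solution. -/
theorem selmer_no_rational_points :
    ¬ ∃ x y z : ℚ, ¬(x = 0 ∧ y = 0 ∧ z = 0) ∧
      3 * x ^ 3 + 4 * y ^ 3 + 5 * z ^ 3 = 0 := by
  rintro ⟨x, y, z, h0, h⟩
  obtain ⟨r, a, b, c, hr, hprim, rfl, rfl, rfl⟩ := exists_primitive_integer_triple h0
  have heq : 3 * a ^ 3 + 4 * b ^ 3 + 5 * c ^ 3 = 0 := by
    have : r ^ 3 * (3 * a ^ 3 + 4 * b ^ 3 + 5 * c ^ 3 : ℤ) = 0 := by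
      push_cast
      linear_combination h
    exact_mod_cast (mul_eq_zero_iff_left (pow_ne_zero 3 hr)).mp this
  exact IsPrimitiveSelmerSolution.false ⟨heq, hprim⟩
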